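/- arXiv:2403.13223 — 3 statements merged into one kernel-verified Lean document; each statement's English description precedes it below -/
import Mathlib

section
/- Let N ≥ 1 and let S be a real N×N skew-symmetric matrix (Sᵀ = −S). For every real number c > 0 with c ≥ λmax(S)/2, there exist real orthogonal N×N matrices Q₁ and Q₂ (Qᵢᵀ·Qᵢ = 1) such that S = c·(Q₁ + Q₂). In particular, there exist orthogonal Q₁, Q₂ and a positive c ≥ λmax(S)/2 with S = c·(Q₁ + Q₂). -/
open Matrix

/-- The largest singular value of a real matrix: the operator norm of the induced linear
map on Euclidean space. -/
noncomputable def lamMax (N : ℕ) (S : Matrix (Fin N) (Fin N) ℝ) : ℝ :=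
  ‖LinearMap.toContinuousLinearMap (Matrix.toEuclideanLin S)‖

open scoped MatrixOrder Matrix.Norms.L2Operator in
lemma exists_sqrt_aux (N : ℕ) (A S : Matrix (Fin N) (Fin N) ℝ) (hA : A.PosSemidef)
    (hc : A * S = S * A) :
    ∃ R : Matrix (Fin N) (Fin N) ℝ, Rᵀ = R ∧ R * R = A ∧ R * S = S * R := by
  have h0 : 0 ≤ A := Matrix.nonneg_iff_posSemidef.mpr hA
  refine ⟨CFC.sqrt A, ?_, CFC.sqrt_mul_sqrt_self A h0, ?_⟩
  · have h := (Matrix.nonneg_iff_posSemidef.mp (CFC.sqrt_nonneg A)).isHermitian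
    rw [← Matrix.conjTranspose_eq_transpose_of_trivial]
    exact h
  · have : Commute A S := hc
    rw [CFC.sqrt_eq_real_sqrt A h0]
    exact (hA.isHermitian.isSelfAdjoint.commute_cfcₙ this _).eq

lemma psd_aux (N : ℕ) (S : Matrix (Fin N) (Fin N) ℝ) (c : ℝ) (hc : lamMax N S / 2 ≤ c) :
    ((2 * c) ^ 2 • (1 : Matrix (Fin N) (Fin N) ℝ) - Sᵀ * S).PosSemidef := by
  refine Matrix.PosSemidef.of_dotProduct_mulVec_nonneg ?_ ?_
  · simp [Matrix.IsHermitian, Matrix.conjTranspose_eq_transpose_of_trivial]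
  · intro x
    have h := (LinearMap.toContinuousLinearMap (Matrix.toEuclideanLin S)).le_opNorm
      (WithLp.toLp 2 x)
    have h2 : ‖WithLp.toLp 2 (S *ᵥ x)‖ ≤ 2 * c * ‖WithLp.toLp 2 x‖ := by
      refine le_trans h ?_
      gcongr
      change lamMax N S ≤ _
      linarith
    have h3 := pow_le_pow_left₀ (norm_nonneg _) h2 2
    rw [mul_pow, EuclideanSpace.real_norm_sq_eq, EuclideanSpace.real_norm_sq_eq] at h3
    have e1 : (Sᵀ * S) *ᵥ x = Sᵀ *ᵥ (S *ᵥ x) := by simp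
    have e2 : x ⬝ᵥ (Sᵀ *ᵥ (S *ᵥ x)) = (S *ᵥ x) ⬝ᵥ (S *ᵥ x) := by
      rw [Matrix.dotProduct_mulVec, Matrix.vecMul_transpose]
    rw [star_trivial, Matrix.sub_mulVec, dotProduct_sub, e1, e2, Matrix.smul_mulVec,
      Matrix.one_mulVec, dotProduct_smul, smul_eq_mul]
    simp only [dotProduct, ← pow_two]
    linarith

lemma main_aux (N : ℕ) (S : Matrix (Fin N) (Fin N) ℝ) (hS : Sᵀ = -S) (c : ℝ) (h0 : 0 < c)
    (hc : lamMax N S / 2 ≤ c) :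
    ∃ Q₁ Q₂ : Matrix (Fin N) (Fin N) ℝ,
        Q₁ᵀ * Q₁ = 1 ∧ Q₂ᵀ * Q₂ = 1 ∧ S = c • (Q₁ + Q₂) := by
  have hp := psd_aux N S c hc
  obtain ⟨R, hR, hRR, hRS⟩ := exists_sqrt_aux N _ S hp (by
    rw [hS]; simp [add_mul, mul_add, mul_assoc])
  rw [hS] at hRR
  have hcc : (2 * c)⁻¹ * (2 * c)⁻¹ * (2 * c) ^ 2 = 1 := by field_simp
  refine ⟨(2 * c)⁻¹ • (S + R), (2 * c)⁻¹ • (S - R), ?_, ?_, ?_⟩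
  · have : (-S + R) * (S + R) = (2 * c) ^ 2 • (1 : Matrix (Fin N) (Fin N) ℝ) := by
      simp only [add_mul, mul_add, hRR, hRS]; noncomm_ring
    rw [Matrix.transpose_smul, Matrix.transpose_add, hS, hR, smul_mul_smul_comm, this,
      smul_smul, hcc, one_smul]
  · have : (-S - R) * (S - R) = (2 * c) ^ 2 • (1 : Matrix (Fin N) (Fin N) ℝ) := by
      simp only [sub_mul, mul_sub, hRR, hRS]; noncomm_ring
    rw [Matrix.transpose_smul, Matrix.transpose_sub, hS, hR, smul_mul_smul_comm, this,
      smul_smul, hcc, one_smul]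
  · rw [← smul_add, smul_smul, add_add_sub_cancel, ← two_smul ℝ S, smul_smul]
    have : c * (2 * c)⁻¹ * 2 = 1 := by field_simp
    rw [this, one_smul]

theorem skew_eq_smul_add_orthogonal (N : ℕ) (hN : 1 ≤ N)
    (S : Matrix (Fin N) (Fin N) ℝ) (hS : Sᵀ = -S) :
    (∀ c : ℝ, 0 < c → lamMax N S / 2 ≤ c →
      ∃ Q₁ Q₂ : Matrix (Fin N) (Fin N) ℝ,
        Q₁ᵀ * Q₁ = 1 ∧ Q₂ᵀ * Q₂ = 1 ∧ S = c • (Q₁ + Q₂)) ∧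
    ∃ (c : ℝ) (Q₁ Q₂ : Matrix (Fin N) (Fin N) ℝ), 0 < c ∧ lamMax N S / 2 ≤ c ∧
      Q₁ᵀ * Q₁ = 1 ∧ Q₂ᵀ * Q₂ = 1 ∧ S = c • (Q₁ + Q₂) := by
  refine ⟨fun c h0 hc => main_aux N S hS c h0 hc, ?_⟩
  have hn : 0 ≤ lamMax N S := norm_nonneg _
  obtain ⟨Q₁, Q₂, h⟩ := main_aux N S hS (lamMax N S / 2 + 1) (by linarith) (by linarith)
  exact ⟨lamMax N S / 2 + 1, Q₁, Q₂, by linarith, by linarith, h⟩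
end

section
/- Fix an integer d ≥ 1, let ρ be a d×d complex density matrix and H a d×d complex Hermitian matrix. Then the traces Tr(H·ρ) and Tr(H²·ρ) are real, Tr(H²·ρ) − Tr(H·ρ)² ≥ 0, and ‖H·ρ − ρ·H‖_F² ≤ 2·(Tr(H²·ρ) − Tr(H·ρ)²). That is, the instantaneous speed of the unitary evolution generated by H at the state ρ is at most √2 times the energy standard deviation. -/
open Matrix
open scoped ComplexOrder

/-- A density matrix: Hermitian, positive semidefinite, trace one. -/
def IsDensityMatrix {d : ℕ} (ρ : Matrix (Fin d) (Fin d) ℂ) : Prop :=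
  ρ.IsHermitian ∧ ρ.PosSemidef ∧ ρ.trace = 1

/-- The Frobenius (Hilbert–Schmidt) norm `‖M‖_F = √(Tr(M·Mᴴ))`. -/
noncomputable def frobNorm {d : ℕ} (M : Matrix (Fin d) (Fin d) ℂ) : ℝ :=
  Real.sqrt ((M * Mᴴ).trace).re

/-- The squared Frobenius norm as an entrywise sum. -/
lemma frobSq_eq {d : ℕ} (M : Matrix (Fin d) (Fin d) ℂ) :
    ((M * Mᴴ).trace).re = ∑ i, ∑ j, ‖M i j‖ ^ 2 := by
  simp [Matrix.trace, Matrix.mul_apply, Complex.mul_conj, Complex.normSq_eq_norm_sq, -Complex.mul_re]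
  norm_cast

lemma frobSq_nonneg {d : ℕ} (M : Matrix (Fin d) (Fin d) ℂ) :
    0 ≤ ((M * Mᴴ).trace).re := by
  rw [frobSq_eq]; positivity

attribute [local instance] Matrix.frobeniusNormedAddCommGroup in
lemma frobSq_mul_le {d : ℕ} (A B : Matrix (Fin d) (Fin d) ℂ) :
    ((A * B * (A * B)ᴴ).trace).re ≤ ((A * Aᴴ).trace).re * ((B * Bᴴ).trace).re := by
  have key : ∀ M : Matrix (Fin d) (Fin d) ℂ, ((M * Mᴴ).trace).re = ‖M‖ ^ 2 := by
    intro M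
    rw [frobSq_eq, Matrix.frobenius_norm_def, ← Real.sqrt_eq_rpow, Real.sq_sqrt (by positivity)]
    simp
  rw [key, key, key, ← mul_pow]
  exact pow_le_pow_left₀ (norm_nonneg _) (Matrix.frobenius_norm_mul A B) 2

lemma im_eq_zero_of_star {z : ℂ} (h : star z = z) : z.im = 0 :=
  Complex.conj_eq_iff_im.mp h

/-- For a density matrix `ρ` and a Hermitian `H`, the traces `Tr(Hρ)` and `Tr(H²ρ)` are
real, the energy variance is nonnegative, and the instantaneous speed of the unitary
evolution generated by `H` satisfies `‖Hρ − ρH‖_F² ≤ 2·(Tr(H²ρ) − Tr(Hρ)²)`. -/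
theorem commutator_frobNorm_le_variance (d : ℕ) (hd : 1 ≤ d)
    (ρ H : Matrix (Fin d) (Fin d) ℂ)
    (hρ : IsDensityMatrix ρ) (hH : H.IsHermitian) :
    ((H * ρ).trace).im = 0 ∧ ((H ^ 2 * ρ).trace).im = 0 ∧
    0 ≤ ((H ^ 2 * ρ).trace).re - ((H * ρ).trace).re ^ 2 ∧
    frobNorm (H * ρ - ρ * H) ^ 2 ≤
      2 * (((H ^ 2 * ρ).trace).re - ((H * ρ).trace).re ^ 2) := by
  obtain ⟨hρh, hρp, htr⟩ := hρ
  have h1 : ((H * ρ).trace).im = 0 := by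
    apply im_eq_zero_of_star
    rw [← Matrix.trace_conjTranspose, Matrix.conjTranspose_mul, hρh.eq, hH.eq, Matrix.trace_mul_comm]
  have h2 : ((H ^ 2 * ρ).trace).im = 0 := by
    apply im_eq_zero_of_star
    rw [← Matrix.trace_conjTranspose, Matrix.conjTranspose_mul, Matrix.conjTranspose_pow, hρh.eq,
      hH.eq, Matrix.trace_mul_comm]
  set c : ℝ := ((H * ρ).trace).re with hc
  have hcc : (H * ρ).trace = (c : ℂ) := Complex.ext (by simp [hc]) (by simp [h1])
  obtain ⟨K, hK⟩ : ∃ K : Matrix (Fin d) (Fin d) ℂ, K = H - (c : ℂ) • 1 := ⟨_, rfl⟩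
  have hKh : Kᴴ = K := by
    rw [hK, Matrix.conjTranspose_sub, Matrix.conjTranspose_smul, hH.eq]; simp
  have hcomm : H * ρ - ρ * H = K * ρ - ρ * K := by
    rw [hK]; simp [sub_mul, mul_sub]
  have hV : ((H ^ 2 * ρ).trace).re - c ^ 2 = ((K * K * ρ).trace).re := by
    have : K * K * ρ = H ^ 2 * ρ - (2 * c : ℂ) • (H * ρ) + ((c : ℂ) ^ 2) • ρ := by
      rw [hK]
      simp only [sub_mul, mul_sub, smul_mul_assoc, mul_smul_comm, one_mul, mul_one, pow_two, mul_smul,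
        smul_sub, two_mul, add_smul]
      abel
    rw [this, Matrix.trace_add, Matrix.trace_sub, Matrix.trace_smul, Matrix.trace_smul, hcc, htr]
    have e : ((2 * c : ℂ) • (c : ℂ)) = ((2 * c * c : ℝ) : ℂ) := by push_cast; simp
    have e' : (((c : ℂ) ^ 2) • (1 : ℂ)) = ((c ^ 2 : ℝ) : ℂ) := by push_cast; simp
    rw [e, e', Complex.add_re, Complex.sub_re, Complex.ofReal_re, Complex.ofReal_re]
    ring
  rw [hV, hcomm]
  obtain ⟨B, hB⟩ : ∃ B : Matrix (Fin d) (Fin d) ℂ, ρ = Bᴴ * B := by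
    open scoped MatrixOrder in
    exact CStarAlgebra.nonneg_iff_eq_star_mul_self.mp hρp.nonneg
  have hVB : (K * Bᴴ * (K * Bᴴ)ᴴ).trace = (K * K * ρ).trace := by
    rw [Matrix.conjTranspose_mul, hKh, Matrix.conjTranspose_conjTranspose, hB, ← Matrix.mul_assoc,
      Matrix.trace_mul_comm]
    simp only [Matrix.mul_assoc]
  have hNB : (B * Bᴴ).trace = 1 := by rw [Matrix.trace_mul_comm, ← hB, htr]
  have hle := frobSq_mul_le (K * Bᴴ) B
  rw [hVB, hNB, Matrix.mul_assoc K, ← hB, Complex.one_re, mul_one] at hle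
  have hpos := frobSq_nonneg (B * K * Bᴴ)
  have hq : (B * K * Bᴴ * (B * K * Bᴴ)ᴴ).trace = (K * ρ * (K * ρ)).trace := by
    have e : (B * K * Bᴴ)ᴴ = B * K * Bᴴ := by
      simp only [Matrix.conjTranspose_mul, hKh, Matrix.conjTranspose_conjTranspose, Matrix.mul_assoc]
    rw [e, Matrix.mul_assoc B K, Matrix.mul_assoc B, Matrix.trace_mul_comm, hB]
    simp only [Matrix.mul_assoc]
  rw [hq] at hpos
  refine ⟨h1, h2, ?_, ?_⟩
  · rw [← hVB]; exact frobSq_nonneg _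
  · unfold frobNorm
    rw [Real.sq_sqrt (frobSq_nonneg _)]
    have e : ((K * ρ - ρ * K) * (K * ρ - ρ * K)ᴴ).trace
        = 2 * (K * ρ * (K * ρ)ᴴ).trace - 2 * (K * ρ * (K * ρ)).trace := by
      simp only [Matrix.conjTranspose_sub, Matrix.conjTranspose_mul, hKh, hρh.eq, sub_mul, mul_sub,
        Matrix.trace_sub]
      rw [Matrix.trace_mul_comm (ρ * K) (K * ρ), Matrix.trace_mul_comm (K * ρ) (ρ * K)]
      have e1 : (ρ * K * (ρ * K)).trace = (K * ρ * (K * ρ)).trace := by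
        rw [Matrix.mul_assoc, Matrix.trace_mul_comm]; simp only [Matrix.mul_assoc]
      rw [e1]; ring
    have er := congrArg Complex.re e
    simp only [Complex.sub_re, Complex.re_ofNat, Complex.im_ofNat, Complex.mul_re, zero_mul, sub_zero] at er
    linarith
end

section
/- Let E be a finite-dimensional real normed vector space and let M be a compact set of continuous linear maps from E to E (with the operator-norm topology). Then the set G := {f ∈ M | there exists g ∈ M with g ∘ f = id and f ∘ g = id} of elements of M that are invertible with inverse in M is compact. (In an operational probabilistic theory with finite-dimensional, convex, closed sets of transformations, this yields that the group of reversible transformations is closed and compact with respect to the operational norm.) -/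
/-- In a finite-dimensional real normed space, for any compact set `M` of continuous
linear endomorphisms, the set of elements of `M` that are invertible with inverse in `M`
is compact. (The group of reversible transformations of an operational probabilistic
theory is compact.) -/
theorem isCompact_invertible_subset (E : Type*) [NormedAddCommGroup E]
    [NormedSpace ℝ E] [FiniteDimensional ℝ E]
    (M : Set (E →L[ℝ] E)) (hM : IsCompact M) :
    IsCompact {f | f ∈ M ∧ ∃ g ∈ M,
      g.comp f = ContinuousLinearMap.id ℝ E ∧ f.comp g = ContinuousLinearMap.id ℝ E} := by
  have hcl : IsClosed {p : (E →L[ℝ] E) × (E →L[ℝ] E) |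
      p.2.comp p.1 = ContinuousLinearMap.id ℝ E ∧
        p.1.comp p.2 = ContinuousLinearMap.id ℝ E} := by
    apply IsClosed.and
    · exact isClosed_eq (continuous_snd.clm_comp continuous_fst) continuous_const
    · exact isClosed_eq (continuous_fst.clm_comp continuous_snd) continuous_const
  have h := ((hM.prod hM).inter_right hcl).image continuous_fst
  convert h using 1
  ext f
  constructor
  · rintro ⟨hf, g, hg, h1, h2⟩
    exact ⟨(f, g), ⟨⟨hf, hg⟩, h1, h2⟩, rfl⟩
  · rintro ⟨⟨k, g⟩, ⟨⟨hf, hg⟩, h1, h2⟩, rfl⟩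
    exact ⟨hf, g, hg, h1, h2⟩
end
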